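/- arXiv:2601.03095 — 3 statements merged into one kernel-verified Lean document; each statement's English description precedes it below -/
import Mathlib

section
/- Let a ∈ ℝ, a ≠ 0, let n ≥ 1, and suppose the functions α_i, β_i, γ_i (0 ≤ i ≤ k−2), differentiable on [0,T), satisfy the system (S) on [0,T). Let Q : ℝ → ℝ be differentiable on [0,T) with β_{k−2}'(t)·q'(t) = (β_{k−2}·q')'(t) + Q'(t) for all t ∈ [0,T). Let w : ℝ^n × ℝ → ℂ be such that for every ξ ∈ ℝ^n the map t ↦ w(ξ,t) is twice differentiable on [0,T) and satisfies the Liouville equation ∂_t²w(ξ,t) = −(‖ξ‖²/q(t)²)·w(ξ,t) on [0,T). Assume: (i) for every t ∈ [0,T) the functions ξ ↦ 𝓔_k(ξ,t) and ξ ↦ ‖ξ‖²·Re(conj(w(ξ,t))·∂_t w(ξ,t)) are Lebesgue integrable on ℝ^n; (ii) the function E(t) := ∫_{ℝ^n} 𝓔_k(ξ,t) dξ is differentiable at every t ∈ [0,T) with E'(t) = ∫_{ℝ^n} ∂_t 𝓔_k(ξ,t) dξ, where ∂_t 𝓔_k(ξ,t) denotes the derivative of s ↦ 𝓔_k(ξ,s)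 at t; (iii) q'(t) = 2a·∫_{ℝ^n} ‖ξ‖²·Re(conj(w(ξ,t))·∂_t w(ξ,t)) dξ for all t ∈ [0,T). Then the function t ↦ E(t) − (1/(2a))·β_{k−2}(t)·q'(t) − (1/(2a))·Q(t) is constant on [0,T). -/
/-! For fixed `ξ`, differentiating `𝓔_k(ξ,·)` along the Liouville equation gives a sum that the
system (S) makes telescope: the `|w|²` terms cancel by the first equation, the `|w'|²` terms by the
second one (the index `i + 1` of the `α, β` sums meets the index `i` of the `γ` sum), and the
`Re (conj w · w')` terms by the third one, except at `i = k - 2`, where no `γ` term is present.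
Hence `∂ₜ𝓔_k(ξ,t) = β_{k-2}'(t) ‖ξ‖² Re (conj w · w')` (`hasDerivWithinAt_quadFormE`).
Integrating in `ξ` and inserting the equation for `q'` yields
`E' = β_{k-2}' q' / (2a) = ((β_{k-2} q')' + Q') / (2a)`, so the functional has zero derivative
on the interval `[0,T)` and is constant. -/

open Set MeasureTheory

/-- The quadratic form 𝓔_k(ξ,t) of the paper, for `w : ℝ → ℂ` and `ξ ∈ ℝⁿ`. -/
noncomputable def quadFormE (T : ℝ) (k : ℕ) (q : ℝ → ℝ) (α β γ : ℕ → ℝ → ℝ)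
    {n : ℕ} (ξ : EuclideanSpace ℝ (Fin n)) (w : ℝ → ℂ) (t : ℝ) : ℝ :=
  (∑ i ∈ Finset.range (k - 1),
      α i t * ‖ξ‖ ^ (2 * k - 2 * i - 2) *
        (‖derivWithin w (Ico (0:ℝ) T) t‖ ^ 2 + ‖ξ‖ ^ 2 * ‖w t‖ ^ 2 / q t ^ 2))
  + (∑ i ∈ Finset.range (k - 1),
      β i t * ‖ξ‖ ^ (2 * k - 2 * i - 2) *
        ((starRingEnd ℂ) (w t) * derivWithin w (Ico (0:ℝ) T) t).re)
  + (∑ i ∈ Finset.range (k - 2),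
      γ i t * ‖ξ‖ ^ (2 * k - 2 * i - 4) * ‖derivWithin w (Ico (0:ℝ) T) t‖ ^ 2)

/-- The telescoping in the derivative of `𝓔_k`, with `k = m + 2`: here `A, B, G` are the
derivatives of `α, β, γ`, while `V = |w'|²`, `P = Re (conj w · w')` and `r = ‖ξ‖`. -/
lemma sum_telescope (m : ℕ) (r V P : ℝ) (A b B G : ℕ → ℝ)
    (h0 : A 0 + b 0 = 0) (h : ∀ i < m, A (i + 1) + b (i + 1) = -G i) :
    (∑ i ∈ Finset.range (m + 1),
        ((A i + b i) * r ^ (2 * (m + 2) - 2 * i - 2) * V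
          + B i * r ^ (2 * (m + 2) - 2 * i - 2) * P))
      + ∑ i ∈ Finset.range m,
        (G i * r ^ (2 * (m + 2) - 2 * i - 4) * V
          - B i * r ^ (2 * (m + 2) - 2 * i - 2) * P) = B m * (r ^ 2 * P) := by
  have hm : 2 * (m + 2) - 2 * m - 2 = 2 := by omega
  rw [Finset.sum_add_distrib, Finset.sum_sub_distrib, Finset.sum_range_succ', h0,
    Finset.sum_range_succ (fun i => B i * r ^ (2 * (m + 2) - 2 * i - 2) * P), hm]
  have e : ∑ i ∈ Finset.range m,
      (A (i + 1) + b (i + 1)) * r ^ (2 * (m + 2) - 2 * (i + 1) - 2) * V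
      = -∑ i ∈ Finset.range m, G i * r ^ (2 * (m + 2) - 2 * i - 4) * V := by
    rw [← Finset.sum_neg_distrib]
    refine Finset.sum_congr rfl fun i hi => ?_
    rw [h i (Finset.mem_range.1 hi),
      show 2 * (m + 2) - 2 * (i + 1) - 2 = 2 * (m + 2) - 2 * i - 4 by omega]
    ring
  rw [e]
  ring

/-- Along the Liouville equation, `∂ₜ𝓔_k = β_{k-2}' ‖ξ‖² Re (conj w · w')`, with `k = m + 2`. -/
lemma hasDerivWithinAt_quadFormE (T : ℝ) (m : ℕ) (q : ℝ → ℝ) (α β γ : ℕ → ℝ → ℝ)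
    {n : ℕ} (ξ : EuclideanSpace ℝ (Fin n)) (w : ℝ → ℂ) (t : ℝ) (ht : t ∈ Ico (0:ℝ) T)
    (A B G : ℕ → ℝ)
    (hqt : q t ≠ 0) (hqd : DifferentiableWithinAt ℝ q (Ico (0:ℝ) T) t)
    (hα : ∀ i ≤ m, HasDerivWithinAt (α i) (A i) (Ico (0:ℝ) T) t)
    (hβ : ∀ i ≤ m, HasDerivWithinAt (β i) (B i) (Ico (0:ℝ) T) t)
    (hγ : ∀ i ≤ m, HasDerivWithinAt (γ i) (G i) (Ico (0:ℝ) T) t)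
    (h1 : ∀ i ≤ m,
      derivWithin (fun s => α i s / q s ^ 2) (Ico (0:ℝ) T) t = β i t / q t ^ 2)
    (h20 : A 0 + β 0 t = 0) (h2 : ∀ i < m, A (i + 1) + β (i + 1) t = -G i)
    (h3 : ∀ i ≤ m, B i = 2 * γ i t / q t ^ 2)
    (hw : DifferentiableWithinAt ℝ w (Ico (0:ℝ) T) t)
    (hw2 : HasDerivWithinAt (derivWithin w (Ico (0:ℝ) T))
        (((-(‖ξ‖ ^ 2 / q t ^ 2) : ℝ) : ℂ) * w t) (Ico (0:ℝ) T) t) :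
    HasDerivWithinAt (fun s => quadFormE T (m + 2) q α β γ ξ w s)
      (B m * (‖ξ‖ ^ 2 * ((starRingEnd ℂ) (w t) * derivWithin w (Ico (0:ℝ) T) t).re))
      (Ico (0:ℝ) T) t := by
  set v := derivWithin w (Ico (0:ℝ) T) with hv
  have hw1 : HasDerivWithinAt w (v t) (Ico (0:ℝ) T) t := hw.hasDerivWithinAt
  set P : ℝ := ((starRingEnd ℂ) (w t) * v t).re with hP
  set c : ℝ := ‖ξ‖ ^ 2 / q t ^ 2 with hc
  have dV : HasDerivWithinAt (fun s => ‖v s‖ ^ 2) (-2 * c * P) (Ico (0:ℝ) T) t := by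
    convert hw2.norm_sq using 1
    simp [Complex.inner, hP]
    ring
  have dW : HasDerivWithinAt (fun s => ‖w s‖ ^ 2) (2 * P) (Ico (0:ℝ) T) t := by
    convert hw1.norm_sq using 1
    rw [Complex.inner, hP, mul_comm (v t)]
  have dP : HasDerivWithinAt (fun s => ((starRingEnd ℂ) (w s) * v s).re)
      (‖v t‖ ^ 2 - c * ‖w t‖ ^ 2) (Ico (0:ℝ) T) t := by
    have := hw1.inner ℝ hw2
    simp only [Complex.inner] at this
    refine (this.congr_of_mem (fun s _ => by rw [mul_comm]) ht).congr_deriv ?_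
    simp only [← Complex.normSq_eq_norm_sq, Complex.normSq_apply, Complex.mul_re,
      Complex.mul_im, Complex.conj_re, Complex.conj_im, Complex.ofReal_re, Complex.ofReal_im]
    ring
  have dα : ∀ i ≤ m, HasDerivWithinAt (fun s => α i s / q s ^ 2) (β i t / q t ^ 2)
      (Ico (0:ℝ) T) t := fun i hi => by
    rw [← h1 i hi]
    exact ((hα i hi).differentiableWithinAt.div (hqd.pow 2)
      (pow_ne_zero 2 hqt)).hasDerivWithinAt
  rw [← sum_telescope m ‖ξ‖ (‖v t‖ ^ 2) P A (fun i => β i t) B G h20 h2]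
  have hsum1 : HasDerivWithinAt (fun s => ∑ i ∈ Finset.range (m + 1),
        (α i s * ‖ξ‖ ^ (2 * (m + 2) - 2 * i - 2) *
            (‖v s‖ ^ 2 + ‖ξ‖ ^ 2 * ‖w s‖ ^ 2 / q s ^ 2)
          + β i s * ‖ξ‖ ^ (2 * (m + 2) - 2 * i - 2) * ((starRingEnd ℂ) (w s) * v s).re))
      (∑ i ∈ Finset.range (m + 1),
        ((A i + β i t) * ‖ξ‖ ^ (2 * (m + 2) - 2 * i - 2) * ‖v t‖ ^ 2
          + B i * ‖ξ‖ ^ (2 * (m + 2) - 2 * i - 2) * P)) (Ico (0:ℝ) T) t := by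
    refine HasDerivWithinAt.fun_sum fun i hi => ?_
    have hi' : i ≤ m := Nat.lt_succ_iff.1 (Finset.mem_range.1 hi)
    have key := ((((hα i hi').mul dV).add (((dα i hi').mul dW).const_mul (‖ξ‖ ^ 2))).add
      ((hβ i hi').mul dP)).const_mul (‖ξ‖ ^ (2 * (m + 2) - 2 * i - 2))
    refine (key.congr_of_mem (f₁ := _) (fun s _ => ?_) ht).congr_deriv ?_
    · simp only [Pi.add_apply, Pi.mul_apply]
      ring
    · rw [hc]
      ring
  have hsum2 : HasDerivWithinAt (fun s => ∑ i ∈ Finset.range m,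
        γ i s * ‖ξ‖ ^ (2 * (m + 2) - 2 * i - 4) * ‖v s‖ ^ 2)
      (∑ i ∈ Finset.range m,
        (G i * ‖ξ‖ ^ (2 * (m + 2) - 2 * i - 4) * ‖v t‖ ^ 2
          - B i * ‖ξ‖ ^ (2 * (m + 2) - 2 * i - 2) * P)) (Ico (0:ℝ) T) t := by
    refine HasDerivWithinAt.fun_sum fun i hi => ?_
    have hi' : i < m := Finset.mem_range.1 hi
    refine (((hγ i hi'.le).mul_const _).mul dV).congr_deriv ?_
    rw [h3 i hi'.le,
      show 2 * (m + 2) - 2 * i - 2 = (2 * (m + 2) - 2 * i - 4) + 2 by omega, pow_add, hc]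
    ring
  refine (hsum1.add hsum2).congr_of_mem (fun s _ => ?_) ht
  simp only [quadFormE, Pi.add_apply, Finset.sum_add_distrib]
  rfl

/-- conservation of the functional
`E(t) − (1/(2a))·β_{k−2}(t)·q'(t) − (1/(2a))·Q(t)` on `[0,T)`, where
`E(t) = ∫_{ℝⁿ} 𝓔_k(ξ,t) dξ`. -/
theorem conserved_functional
    (T : ℝ) (hT : 0 < T) (k : ℕ) (hk : 3 ≤ k)
    (q : ℝ → ℝ)
    (hq : ContDiffOn ℝ (2 * k - 2 : ℕ) q (Ico (0:ℝ) T))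
    (hq0 : ∀ t ∈ Ico (0:ℝ) T, q t ≠ 0)
    (a : ℝ) (ha : a ≠ 0) (n : ℕ) (hn : 1 ≤ n)
    (α β γ : ℕ → ℝ → ℝ)
    (hαd : ∀ i ≤ k - 2, DifferentiableOn ℝ (α i) (Ico (0:ℝ) T))
    (hβd : ∀ i ≤ k - 2, DifferentiableOn ℝ (β i) (Ico (0:ℝ) T))
    (hγd : ∀ i ≤ k - 2, DifferentiableOn ℝ (γ i) (Ico (0:ℝ) T))
    (hS1 : ∀ i ≤ k - 2, ∀ t ∈ Ico (0:ℝ) T,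
      derivWithin (fun s => α i s / q s ^ 2) (Ico (0:ℝ) T) t = β i t / q t ^ 2)
    (hS2₀ : ∀ t ∈ Ico (0:ℝ) T, derivWithin (α 0) (Ico (0:ℝ) T) t + β 0 t = 0)
    (hS2 : ∀ i, 1 ≤ i → i ≤ k - 2 → ∀ t ∈ Ico (0:ℝ) T,
      derivWithin (α i) (Ico (0:ℝ) T) t + β i t
        = -(derivWithin (γ (i - 1)) (Ico (0:ℝ) T) t))
    (hS3 : ∀ i ≤ k - 2, ∀ t ∈ Ico (0:ℝ) T,
      derivWithin (β i) (Ico (0:ℝ) T) t = 2 * γ i t / q t ^ 2)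
    (Q : ℝ → ℝ)
    (hQd : DifferentiableOn ℝ Q (Ico (0:ℝ) T))
    (hQ : ∀ t ∈ Ico (0:ℝ) T,
      derivWithin (β (k - 2)) (Ico (0:ℝ) T) t * derivWithin q (Ico (0:ℝ) T) t
        = derivWithin (fun s => β (k - 2) s * derivWithin q (Ico (0:ℝ) T) s)
            (Ico (0:ℝ) T) t
          + derivWithin Q (Ico (0:ℝ) T) t)
    (w : EuclideanSpace ℝ (Fin n) → ℝ → ℂ)
    (hw : ∀ ξ : EuclideanSpace ℝ (Fin n), DifferentiableOn ℝ (w ξ) (Ico (0:ℝ) T))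
    (hw2 : ∀ ξ : EuclideanSpace ℝ (Fin n), ∀ t ∈ Ico (0:ℝ) T,
      HasDerivWithinAt (derivWithin (w ξ) (Ico (0:ℝ) T))
        (((-(‖ξ‖ ^ 2 / q t ^ 2) : ℝ) : ℂ) * w ξ t) (Ico (0:ℝ) T) t)
    (hint1 : ∀ t ∈ Ico (0:ℝ) T,
      Integrable (fun ξ : EuclideanSpace ℝ (Fin n) => quadFormE T k q α β γ ξ (w ξ) t))
    (hint2 : ∀ t ∈ Ico (0:ℝ) T,
      Integrable (fun ξ : EuclideanSpace ℝ (Fin n) =>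
        ‖ξ‖ ^ 2 * ((starRingEnd ℂ) (w ξ t) * derivWithin (w ξ) (Ico (0:ℝ) T) t).re))
    (hE' : ∀ t ∈ Ico (0:ℝ) T,
      HasDerivWithinAt
        (fun s => ∫ ξ : EuclideanSpace ℝ (Fin n), quadFormE T k q α β γ ξ (w ξ) s)
        (∫ ξ : EuclideanSpace ℝ (Fin n),
          derivWithin (fun s => quadFormE T k q α β γ ξ (w ξ) s) (Ico (0:ℝ) T) t)
        (Ico (0:ℝ) T) t)
    (hq' : ∀ t ∈ Ico (0:ℝ) T,
      derivWithin q (Ico (0:ℝ) T) t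
        = 2 * a * ∫ ξ : EuclideanSpace ℝ (Fin n),
            ‖ξ‖ ^ 2 * ((starRingEnd ℂ) (w ξ t) * derivWithin (w ξ) (Ico (0:ℝ) T) t).re) :
    ∃ c : ℝ, ∀ t ∈ Ico (0:ℝ) T,
      (∫ ξ : EuclideanSpace ℝ (Fin n), quadFormE T k q α β γ ξ (w ξ) t)
        - (1 / (2 * a)) * β (k - 2) t * derivWithin q (Ico (0:ℝ) T) t
        - (1 / (2 * a)) * Q t = c := by
  obtain ⟨m, rfl⟩ : ∃ m, k = m + 2 := ⟨k - 2, by omega⟩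
  simp only [show m + 2 - 2 = m by omega] at *
  have hud : UniqueDiffOn ℝ (Ico (0:ℝ) T) := uniqueDiffOn_Ico 0 T
  have hqd : DifferentiableOn ℝ q (Ico (0:ℝ) T) :=
    hq.differentiableOn (by simp; omega)
  have hqdd : DifferentiableOn ℝ (derivWithin q (Ico (0:ℝ) T)) (Ico (0:ℝ) T) :=
    (hq.derivWithin (m := 1) hud (by norm_cast; omega)).differentiableOn one_ne_zero
  have hE : ∀ t ∈ Ico (0:ℝ) T, HasDerivWithinAt
      (fun s => ∫ ξ : EuclideanSpace ℝ (Fin n), quadFormE T (m + 2) q α β γ ξ (w ξ) s)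
      (1 / (2 * a) * (derivWithin (β m) (Ico (0:ℝ) T) t * derivWithin q (Ico (0:ℝ) T) t))
      (Ico (0:ℝ) T) t := by
    intro t ht
    refine (hE' t ht).congr_deriv ?_
    have hpt : ∀ ξ : EuclideanSpace ℝ (Fin n),
        derivWithin (fun s => quadFormE T (m + 2) q α β γ ξ (w ξ) s) (Ico (0:ℝ) T) t
        = derivWithin (β m) (Ico (0:ℝ) T) t *
          (‖ξ‖ ^ 2 * ((starRingEnd ℂ) (w ξ t) * derivWithin (w ξ) (Ico (0:ℝ) T) t).re) :=
      fun ξ => (hasDerivWithinAt_quadFormE T m q α β γ ξ (w ξ) t ht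
        (fun i => derivWithin (α i) (Ico (0:ℝ) T) t)
        (fun i => derivWithin (β i) (Ico (0:ℝ) T) t)
        (fun i => derivWithin (γ i) (Ico (0:ℝ) T) t) (hq0 t ht) (hqd t ht)
        (fun i hi => (hαd i hi t ht).hasDerivWithinAt)
        (fun i hi => (hβd i hi t ht).hasDerivWithinAt)
        (fun i hi => (hγd i hi t ht).hasDerivWithinAt)
        (fun i hi => hS1 i hi t ht) (hS2₀ t ht)
        (fun i hi => hS2 (i + 1) (by omega) (by omega) t ht)
        (fun i hi => hS3 i hi t ht) (hw ξ t ht) (hw2 ξ t ht)).derivWithin (hud t ht)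
    simp only [hpt]
    rw [integral_const_mul, hq' t ht]
    field_simp
  have hF : ∀ t ∈ Ico (0:ℝ) T, HasDerivWithinAt
      (fun s => (∫ ξ : EuclideanSpace ℝ (Fin n), quadFormE T (m + 2) q α β γ ξ (w ξ) s)
        - (1 / (2 * a)) * β m s * derivWithin q (Ico (0:ℝ) T) s
        - (1 / (2 * a)) * Q s) 0 (Ico (0:ℝ) T) t := by
    intro t ht
    have hβq := (((hβd m le_rfl t ht).mul (hqdd t ht)).hasDerivWithinAt).const_mul (1 / (2 * a))
    have key := ((hE t ht).sub hβq).sub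
      ((hQd t ht).hasDerivWithinAt.const_mul (1 / (2 * a)))
    refine (key.congr_of_mem (fun s _ => ?_) ht).congr_deriv ?_
    · simp only [Pi.sub_apply, Pi.mul_apply]
      ring
    · rw [hQ t ht]
      simp only [Pi.mul_def]
      ring
  refine ⟨(fun s => (∫ ξ : EuclideanSpace ℝ (Fin n), quadFormE T (m + 2) q α β γ ξ (w ξ) s)
    - (1 / (2 * a)) * β m s * derivWithin q (Ico (0:ℝ) T) s - (1 / (2 * a)) * Q s) 0,
    fun t ht => ?_⟩
  have h := (convex_Ico (0:ℝ) T).norm_image_sub_le_of_norm_hasDerivWithin_le (C := 0) hF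
    (fun _ _ => by simp) (left_mem_Ico.2 hT) ht
  rw [zero_mul, norm_le_zero_iff, sub_eq_zero] at h
  exact h
end

section
/- Set γ_{−1} ≡ 0 and, for 0 ≤ i ≤ k−2, define γ_i := −(1/2)·q²·G_i'', α_i := G_i − γ_{i−1}, and β_i := −G_i'. Then for each 0 ≤ i ≤ k−2 there exist real polynomials A_i in 2i+1 variables, B_i in 2i+2 variables, and C_i in 2i+3 variables such that for all t ∈ [0,T): α_i(t) = A_i(q(t), q'(t), …, q^{(2i)}(t)), β_i(t) = B_i(q(t), q'(t), …, q^{(2i+1)}(t)), and γ_i(t) = C_i(q(t), q'(t), …, q^{(2i+2)}(t)). -/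
/-!
Put `H i = G i / q`, so that `H i' = -(1/4) q (G (i-1))'''`. A polynomial expression for `H i`
is obtained without integrating differential polynomials: in terms of the generating series
`G = ∑ G i λ^i` the recursion reads `(G/q)' = -(λ/4) q G'''`, and multiplying by `G/q` gives
the first integral `(G/q)² + (λ/2) (G G'' - (G')²/2)`, which is constant in `t`. Its coefficient
of `λ^(n+1)` (`first_integral`) is
`∑_{a+b=n+1} H a H b + (1/2) ∑_{a+b=n} (G a G b'' - (1/2) G a' G b')`.
In it `H (n+1)` occurs only in the terms `2 H 0 H (n+1) = 2 C₀ H (n+1)`, and everything else is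
a polynomial in `q, …, q^(2n+2)` by strong induction. As `C₀ ≠ 0`, this can be solved for
`H (n+1)`. Then `G i = q H i` has order at most `2i`, and each of the two differentiations needed
for `β` and `γ` raises the order by at most one (`IsDiffPoly.derivWithin`).
-/

open Set

/-- `f` coincides on `S` with a real polynomial in the first `m` functions among
`q, q', q'', …` (so in derivatives of order `< m`), the derivatives being taken within `S`. -/
def IsDiffPoly (S : Set ℝ) (q : ℝ → ℝ) (m : ℕ) (f : ℝ → ℝ) : Prop :=
  ∃ P : MvPolynomial (Fin m) ℝ, ∀ t ∈ S,
    f t = MvPolynomial.eval (fun j : Fin m => iteratedDerivWithin (j : ℕ) q S t) P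

namespace IsDiffPoly

variable {S : Set ℝ} {q f g : ℝ → ℝ} {m n : ℕ}

lemma congr (hf : IsDiffPoly S q m f) (h : ∀ t ∈ S, g t = f t) : IsDiffPoly S q m g := by
  obtain ⟨P, hP⟩ := hf
  exact ⟨P, fun t ht => (h t ht).trans (hP t ht)⟩

lemma const (c : ℝ) : IsDiffPoly S q m (fun _ => c) :=
  ⟨MvPolynomial.C c, fun t _ => by simp⟩

lemma add (hf : IsDiffPoly S q m f) (hg : IsDiffPoly S q m g) :
    IsDiffPoly S q m (fun t => f t + g t) := by
  obtain ⟨P, hP⟩ := hf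
  obtain ⟨Q, hQ⟩ := hg
  exact ⟨P + Q, fun t ht => by simp [hP t ht, hQ t ht]⟩

lemma mul (hf : IsDiffPoly S q m f) (hg : IsDiffPoly S q m g) :
    IsDiffPoly S q m (fun t => f t * g t) := by
  obtain ⟨P, hP⟩ := hf
  obtain ⟨Q, hQ⟩ := hg
  exact ⟨P * Q, fun t ht => by simp [hP t ht, hQ t ht]⟩

lemma const_mul (c : ℝ) (hf : IsDiffPoly S q m f) : IsDiffPoly S q m (fun t => c * f t) :=
  (const c).mul hf

lemma sub (hf : IsDiffPoly S q m f) (hg : IsDiffPoly S q m g) :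
    IsDiffPoly S q m (fun t => f t - g t) :=
  (hf.add (hg.const_mul (-1))).congr fun t _ => by ring

lemma sum {ι : Type*} (s : Finset ι) {F : ι → ℝ → ℝ} (h : ∀ a ∈ s, IsDiffPoly S q m (F a)) :
    IsDiffPoly S q m (fun t => ∑ a ∈ s, F a t) := by
  classical
  induction s using Finset.induction_on with
  | empty => exact (const 0).congr fun t _ => by simp
  | insert a s ha ih =>
    refine ((h a (by simp)).add (ih fun b hb => h b (by simp [hb]))).congr fun t _ => ?_
    rw [Finset.sum_insert ha]

lemma mono (hf : IsDiffPoly S q m f) (h : m ≤ n) : IsDiffPoly S q n f := by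
  obtain ⟨P, hP⟩ := hf
  refine ⟨MvPolynomial.rename (Fin.castLE h) P, fun t ht => ?_⟩
  rw [hP t ht, MvPolynomial.eval_rename]
  rfl

lemma self (hm : 0 < m) : IsDiffPoly S q m q :=
  ⟨MvPolynomial.X ⟨0, hm⟩, fun t _ => by simp⟩

/-- Differentiation raises the order of a differential polynomial by at most one. -/
lemma derivWithin {N : ℕ} (hS : UniqueDiffOn ℝ S) (hq : ContDiffOn ℝ N q S) (hm : m ≤ N)
    (hf : IsDiffPoly S q m f) : IsDiffPoly S q (m + 1) (derivWithin f S) := by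
  obtain ⟨P, hP⟩ := hf
  have key : ∃ Q : ℝ → ℝ, IsDiffPoly S q (m + 1) Q ∧ ∀ t ∈ S,
      HasDerivWithinAt (fun s => MvPolynomial.eval
        (fun j : Fin m => iteratedDerivWithin (j : ℕ) q S s) P) (Q t) S t := by
    clear hP
    induction P using MvPolynomial.induction_on with
    | C a =>
      refine ⟨_, const 0, fun t _ => ?_⟩
      simpa using hasDerivWithinAt_const t S a
    | add P₁ P₂ h₁ h₂ =>
      obtain ⟨Q₁, hQ₁, h₁⟩ := h₁
      obtain ⟨Q₂, hQ₂, h₂⟩ := h₂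
      refine ⟨_, hQ₁.add hQ₂, fun t ht => ?_⟩
      simpa using (h₁ t ht).fun_add (h₂ t ht)
    | mul_X P₁ j h₁ =>
      obtain ⟨Q₁, hQ₁, h₁⟩ := h₁
      have e₀ : IsDiffPoly S q (m + 1) (iteratedDerivWithin (j : ℕ) q S) :=
        ⟨MvPolynomial.X ⟨j, by omega⟩, fun t _ => by simp⟩
      have e₁ : IsDiffPoly S q (m + 1) (iteratedDerivWithin ((j : ℕ) + 1) q S) :=
        ⟨MvPolynomial.X ⟨j + 1, by omega⟩, fun t _ => by simp⟩
      have eP : IsDiffPoly S q (m + 1) (fun s => MvPolynomial.eval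
          (fun j : Fin m => iteratedDerivWithin (j : ℕ) q S s) P₁) :=
        IsDiffPoly.mono (m := m) ⟨P₁, fun t _ => rfl⟩ (by omega)
      refine ⟨_, (hQ₁.mul e₀).add (eP.mul e₁), fun t ht => ?_⟩
      have hd : HasDerivWithinAt (iteratedDerivWithin (j : ℕ) q S)
          (iteratedDerivWithin ((j : ℕ) + 1) q S t) S t := by
        rw [iteratedDerivWithin_succ]
        exact (hq.differentiableOn_iteratedDerivWithin
          (by exact_mod_cast (by omega : (j : ℕ) < N)) hS t ht).hasDerivWithinAt
      simpa using (h₁ t ht).fun_mul hd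
  obtain ⟨Q, hQ, h⟩ := key
  refine hQ.congr fun t ht => ?_
  exact ((h t ht).congr hP (hP t ht)).derivWithin (hS t ht)

end IsDiffPoly

open Finset in
/-- The coefficient of `λ^(n+1)` of the first integral `(G/q)² + (λ/2) (G G'' - (G')²/2)` is
constant. Here `G1, G2, G3` are the successive derivatives of `G`. -/
lemma first_integral {S : Set ℝ} (hS : Convex ℝ S) (q : ℝ → ℝ) (hq0 : ∀ t ∈ S, q t ≠ 0)
    (n : ℕ) (c : ℝ) (G G1 G2 G3 H : ℕ → ℝ → ℝ)
    (h0 : ∀ t ∈ S, H 0 t = c)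
    (hH : ∀ a ≤ n + 1, ∀ t ∈ S, H a t = G a t / q t)
    (hHd : ∀ a ≤ n, ∀ t ∈ S, HasDerivWithinAt (H (a + 1)) (-(1/4) * q t * G3 a t) S t)
    (h1 : ∀ a ≤ n, ∀ t ∈ S, HasDerivWithinAt (G a) (G1 a t) S t)
    (h2 : ∀ a ≤ n, ∀ t ∈ S, HasDerivWithinAt (G1 a) (G2 a t) S t)
    (h3 : ∀ a ≤ n, ∀ t ∈ S, HasDerivWithinAt (G2 a) (G3 a t) S t) :
    ∃ K : ℝ, ∀ t ∈ S, ∑ p ∈ antidiagonal (n + 1), H p.1 t * H p.2 t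
      + (1/2) * ∑ p ∈ antidiagonal n,
          (G p.1 t * G2 p.2 t - (1/2) * (G1 p.1 t * G1 p.2 t)) = K := by
  set E : ℝ → ℝ := fun t => ∑ p ∈ antidiagonal (n + 1), H p.1 t * H p.2 t
      + (1/2) * ∑ p ∈ antidiagonal n,
          (G p.1 t * G2 p.2 t - (1/2) * (G1 p.1 t * G1 p.2 t)) with hE
  let H1 : ℕ → ℝ → ℝ := fun a t => Nat.casesOn a 0 fun b => -(1/4) * q t * G3 b t
  have hH1 : ∀ a ≤ n + 1, ∀ t ∈ S, HasDerivWithinAt (H a) (H1 a t) S t := by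
    intro a ha t ht
    cases a with
    | zero => exact (hasDerivWithinAt_const t S c).congr h0 (h0 t ht)
    | succ b => exact hHd b (by omega) t ht
  have hd : ∀ t ∈ S, HasDerivWithinAt E 0 S t := by
    intro t ht
    have d1 : HasDerivWithinAt (fun t => ∑ p ∈ antidiagonal (n + 1), H p.1 t * H p.2 t)
        (∑ p ∈ antidiagonal (n + 1), (H1 p.1 t * H p.2 t + H p.1 t * H1 p.2 t)) S t := by
      refine HasDerivWithinAt.fun_sum fun p hp => ?_
      have := mem_antidiagonal.1 hp
      exact (hH1 p.1 (by omega) t ht).fun_mul (hH1 p.2 (by omega) t ht)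
    have d2 : HasDerivWithinAt (fun t => ∑ p ∈ antidiagonal n,
          (G p.1 t * G2 p.2 t - (1/2) * (G1 p.1 t * G1 p.2 t)))
        (∑ p ∈ antidiagonal n, ((G1 p.1 t * G2 p.2 t + G p.1 t * G3 p.2 t)
          - (1/2) * (G2 p.1 t * G1 p.2 t + G1 p.1 t * G2 p.2 t))) S t := by
      refine HasDerivWithinAt.fun_sum fun p hp => ?_
      have := mem_antidiagonal.1 hp
      exact ((h1 p.1 (by omega) t ht).fun_mul (h3 p.2 (by omega) t ht)).fun_sub
        (((h2 p.1 (by omega) t ht).fun_mul (h2 p.2 (by omega) t ht)).const_mul _)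
    have d := d1.fun_add (d2.const_mul (1/2))
    refine d.congr_deriv ?_
    have s1 : ∑ p ∈ antidiagonal (n + 1), H1 p.1 t * H p.2 t
        = -(1/4) * ∑ p ∈ antidiagonal n, G p.1 t * G3 p.2 t := by
      rw [Finset.Nat.sum_antidiagonal_succ,
        ← Finset.Nat.sum_antidiagonal_swap (f := fun p : ℕ × ℕ => G p.1 t * G3 p.2 t), mul_sum]
      have hz : H1 0 t = 0 := rfl
      have hs : ∀ b, H1 (b + 1) t = -(1/4) * q t * G3 b t := fun _ => rfl
      simp only [hz, hs, zero_mul, zero_add]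
      refine sum_congr rfl fun p hp => ?_
      have := mem_antidiagonal.1 hp
      rw [hH p.2 (by omega) t ht]
      have := hq0 t ht
      simp only [Prod.fst_swap, Prod.snd_swap]
      field_simp
    have s2 : ∑ p ∈ antidiagonal (n + 1), H p.1 t * H1 p.2 t
        = ∑ p ∈ antidiagonal (n + 1), H1 p.1 t * H p.2 t := by
      rw [← Finset.Nat.sum_antidiagonal_swap]
      simp [mul_comm]
    have s3 : ∑ p ∈ antidiagonal n, G2 p.1 t * G1 p.2 t
        = ∑ p ∈ antidiagonal n, G1 p.1 t * G2 p.2 t := by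
      rw [← Finset.Nat.sum_antidiagonal_swap]
      simp [mul_comm]
    rw [sum_add_distrib, s2, s1, sum_sub_distrib, ← mul_sum, sum_add_distrib, sum_add_distrib, s3]
    ring
  rcases S.eq_empty_or_nonempty with rfl | ⟨x, hx⟩
  · exact ⟨0, by simp⟩
  refine ⟨E x, fun t ht => ?_⟩
  have := hS.norm_image_sub_le_of_norm_hasDerivWithin_le (C := 0) hd (by simp) hx ht
  rw [zero_mul] at this
  exact sub_eq_zero.1 (norm_le_zero_iff.1 this)

/-- with `γ_i := −(1/2)q²G_i''`, `α_i := G_i − γ_{i−1}` (`γ_{−1} ≡ 0`),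
`β_i := −G_i'`, each of `α_i, β_i, γ_i` is a polynomial in `q` and its derivatives of
order `≤ 2i`, `≤ 2i+1`, `≤ 2i+2` respectively, on `[0,T)`. -/
theorem alpha_beta_gamma_polynomial
    (T : ℝ) (hT : 0 < T) (k : ℕ) (hk : 3 ≤ k)
    (q : ℝ → ℝ)
    (hq : ContDiffOn ℝ (2 * k - 2 : ℕ) q (Ico (0:ℝ) T))
    (hq0 : ∀ t ∈ Ico (0:ℝ) T, q t ≠ 0)
    (C₀ : ℝ) (hC₀ : C₀ ≠ 0)
    (G : ℕ → ℝ → ℝ)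
    (hGreg : ∀ i ≤ k - 2, ContDiffOn ℝ (2 * k - 2 * i - 2 : ℕ) (G i) (Ico (0:ℝ) T))
    (hG0 : ∀ t ∈ Ico (0:ℝ) T, G 0 t = C₀ * q t)
    (hGrec : ∀ i, 1 ≤ i → i ≤ k - 2 → ∀ t ∈ Ico (0:ℝ) T,
      derivWithin (fun s => G i s / q s) (Ico (0:ℝ) T) t
        = -(1/4) * q t * iteratedDerivWithin 3 (G (i - 1)) (Ico (0:ℝ) T) t)
    (γ α β : ℕ → ℝ → ℝ)
    (hγ : γ = fun i t => -(1/2) * q t ^ 2 * iteratedDerivWithin 2 (G i) (Ico (0:ℝ) T) t)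
    (hα : α = fun i t => G i t - (if i = 0 then 0 else γ (i - 1) t))
    (hβ : β = fun i t => -(derivWithin (G i) (Ico (0:ℝ) T) t)) :
    ∀ i ≤ k - 2,
      ∃ (A : MvPolynomial (Fin (2 * i + 1)) ℝ) (B : MvPolynomial (Fin (2 * i + 2)) ℝ)
        (C : MvPolynomial (Fin (2 * i + 3)) ℝ),
        ∀ t ∈ Ico (0:ℝ) T,
          α i t = MvPolynomial.eval
              (fun j : Fin (2 * i + 1) => iteratedDerivWithin (j : ℕ) q (Ico (0:ℝ) T) t) A
          ∧ β i t = MvPolynomial.eval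
              (fun j : Fin (2 * i + 2) => iteratedDerivWithin (j : ℕ) q (Ico (0:ℝ) T) t) B
          ∧ γ i t = MvPolynomial.eval
              (fun j : Fin (2 * i + 3) => iteratedDerivWithin (j : ℕ) q (Ico (0:ℝ) T) t) C := by
  set S := Ico (0:ℝ) T with hSdef
  have hS : UniqueDiffOn ℝ S := uniqueDiffOn_Ico 0 T
  -- the three derivatives of `G a` available when `a` is not the last index
  have hder : ∀ a, a + 1 ≤ k - 2 → ∀ j ≤ 2, ∀ t ∈ S, HasDerivWithinAt
      (iteratedDerivWithin j (G a) S) (iteratedDerivWithin (j + 1) (G a) S t) S t := by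
    intro a ha j hj t ht
    rw [iteratedDerivWithin_succ]
    exact ((hGreg a (by omega)).differentiableOn_iteratedDerivWithin
      (by exact_mod_cast (by omega : j < 2 * k - 2 * a - 2)) hS t ht).hasDerivWithinAt
  have hGH : ∀ i, IsDiffPoly S q (2 * i + 1) (fun t => G i t / q t) →
      IsDiffPoly S q (2 * i + 1) (G i) := fun i h =>
    (h.mul (.self (by omega))).congr fun t ht => (div_mul_cancel₀ _ (hq0 t ht)).symm
  have hG1 : ∀ i ≤ k - 2, IsDiffPoly S q (2 * i + 1) (G i) →
      IsDiffPoly S q (2 * i + 2) (iteratedDerivWithin 1 (G i) S) := fun i hi h =>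
    (h.derivWithin hS hq (by omega)).congr fun t ht => by rw [iteratedDerivWithin_one]
  have hG2 : ∀ i ≤ k - 2, IsDiffPoly S q (2 * i + 1) (G i) →
      IsDiffPoly S q (2 * i + 3) (iteratedDerivWithin 2 (G i) S) := fun i hi h =>
    ((hG1 i hi h).derivWithin hS hq (by omega)).congr fun t ht => by
      rw [iteratedDerivWithin_succ]
  have main : ∀ i ≤ k - 2, IsDiffPoly S q (2 * i + 1) (fun t => G i t / q t) := by
    intro i
    induction i using Nat.strong_induction_on with
    | _ i ih =>
    intro hi
    cases i with
    | zero =>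
      exact (IsDiffPoly.const C₀).congr fun t ht => by
        rw [hG0 t ht, mul_div_cancel_right₀ _ (hq0 t ht)]
    | succ n =>
    obtain ⟨K, hK⟩ := first_integral (convex_Ico 0 T) q hq0 n C₀ G
      (fun a => iteratedDerivWithin 1 (G a) S) (fun a => iteratedDerivWithin 2 (G a) S)
      (fun a => iteratedDerivWithin 3 (G a) S) (fun a t => G a t / q t)
      (fun t ht => by
        show G 0 t / q t = C₀
        rw [hG0 t ht, mul_div_cancel_right₀ _ (hq0 t ht)])
      (fun a _ t _ => rfl)
      (fun a ha t ht => by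
        have hdiff : DifferentiableWithinAt ℝ (fun s => G (a + 1) s / q s) S t :=
          ((hGreg (a + 1) (by omega)).differentiableOn
            (by exact_mod_cast (by omega : 2 * k - 2 * (a + 1) - 2 ≠ 0)) t ht).fun_div
          (hq.differentiableOn (by exact_mod_cast (by omega : 2 * k - 2 ≠ 0)) t ht) (hq0 t ht)
        have := hdiff.hasDerivWithinAt
        rwa [hGrec (a + 1) (by omega) (by omega) t ht] at this)
      (fun a ha t ht => by
        have := hder a (by omega) 0 (by omega) t ht
        rwa [iteratedDerivWithin_zero] at this)
      (fun a ha t ht => hder a (by omega) 1 (by omega) t ht)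
      (fun a ha t ht => hder a (by omega) 2 (by omega) t ht)
    have lower : ∀ a ≤ n, IsDiffPoly S q (2 * a + 1) (G a) := fun a ha =>
      hGH a (ih a (by omega) (by omega))
    have p2 : IsDiffPoly S q (2 * (n + 1) + 1) (fun t => ∑ p ∈ Finset.HasAntidiagonal.antidiagonal n,
        (G p.1 t * iteratedDerivWithin 2 (G p.2) S t
          - (1/2) * (iteratedDerivWithin 1 (G p.1) S t * iteratedDerivWithin 1 (G p.2) S t))) := by
      refine IsDiffPoly.sum _ fun p hp => ?_
      have := Finset.HasAntidiagonal.mem_antidiagonal.1 hp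
      have l1 := lower p.1 (by omega)
      have l2 := lower p.2 (by omega)
      exact ((l1.mono (by omega)).mul ((hG2 p.2 (by omega) l2).mono (by omega))).sub
        ((((hG1 p.1 (by omega) l1).mono (by omega)).mul
          ((hG1 p.2 (by omega) l2).mono (by omega))).const_mul _)
    -- the products `H a * H b` with `a + b = n + 1` and both indices at most `n`
    have p1 : IsDiffPoly S q (2 * (n + 1) + 1) (fun t =>
        ∑ p ∈ (Finset.HasAntidiagonal.antidiagonal (n + 1)).filter (fun p => p.1 ≤ n ∧ p.2 ≤ n),
          (G p.1 t / q t) * (G p.2 t / q t)) := by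
      refine IsDiffPoly.sum _ fun p hp => ?_
      obtain ⟨-, ha, hb⟩ := Finset.mem_filter.1 hp
      exact ((ih p.1 (by omega) (by omega)).mono (by omega)).mul
        ((ih p.2 (by omega) (by omega)).mono (by omega))
    have hcompl : (Finset.HasAntidiagonal.antidiagonal (n + 1)).filter (fun p => ¬ (p.1 ≤ n ∧ p.2 ≤ n))
        = {(0, n + 1), (n + 1, 0)} := by
      ext ⟨a, b⟩
      simp only [Finset.mem_filter, Finset.HasAntidiagonal.mem_antidiagonal, Finset.mem_insert,
        Finset.mem_singleton, Prod.mk.injEq]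
      omega
    refine ((((IsDiffPoly.const K).sub p1).sub (p2.const_mul (1/2))).const_mul
      (1 / (2 * C₀))).congr fun t ht => ?_
    have hKt := hK t ht
    rw [← Finset.sum_filter_add_sum_filter_not _ (fun p : ℕ × ℕ => p.1 ≤ n ∧ p.2 ≤ n), hcompl,
      Finset.sum_pair (by simp), show G 0 t / q t = C₀ by
        rw [hG0 t ht, mul_div_cancel_right₀ _ (hq0 t ht)]] at hKt
    rw [← hKt]
    field_simp
    ring
  intro i hi
  have g0 := hGH i (main i hi)
  have hA : IsDiffPoly S q (2 * i + 1) (α i) := by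
    rw [hα, hγ]
    cases i with
    | zero => exact g0.congr fun t _ => by simp
    | succ n =>
      have g := hG2 n (by omega) (hGH n (main n (by omega)))
      have hq1 : IsDiffPoly S q (2 * (n + 1) + 1) q := .self (by omega)
      refine (g0.sub (((hq1.mul hq1).const_mul (-(1/2))).mul g)).congr fun t _ => ?_
      simp [pow_two]
  have hB : IsDiffPoly S q (2 * i + 2) (β i) := by
    rw [hβ]
    refine ((hG1 i hi g0).const_mul (-1)).congr fun t _ => ?_
    simp [iteratedDerivWithin_one]
  have hC : IsDiffPoly S q (2 * i + 3) (γ i) := by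
    rw [hγ]
    have hq1 : IsDiffPoly S q (2 * i + 3) q := .self (by omega)
    refine (((hq1.mul hq1).const_mul (-(1/2))).mul (hG2 i hi g0)).congr fun t _ => ?_
    simp [pow_two]
  obtain ⟨A, hA⟩ := hA
  obtain ⟨B, hB⟩ := hB
  obtain ⟨C, hC⟩ := hC
  exact ⟨A, B, C, fun t ht => ⟨hA t ht, hB t ht, hC t ht⟩⟩
end

section
/- Assume moreover k ≥ 4, and fix i with 2 ≤ i ≤ k−2. Let F : ℝ → ℝ be any function differentiable on [0,T) with F'(t) = G_1(t)·G_{i−2}'''(t) for all t ∈ [0,T). Then there exists a constant c ∈ ℝ such that for all t ∈ [0,T): G_i(t) = −(q(t)/4)·[ q(t)·G_{i−1}''(t) − q'(t)·G_{i−1}'(t) + q''(t)·G_{i−1}(t) + (4/C₀)·G_1(t)·G_{i−1}(t)/q(t)² + (1/C₀)·(F(t) + c) ]. -/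
open Set

/-!
Write `S = [0, T)`, `g = G_{i-1}` and
`H = q g'' - q' g' + q'' g + (4/C₀) (G_1/q) (g/q) + F/C₀`. By the product rule the second-order
cross terms of `H'` cancel. Since `(G_1/q)' = -(C₀/4) q q'''`, one half of the derivative of the
quadratic term cancels `q''' g`; since `(g/q)' = -(1/4) q G_{i-2}'''`, the other half
cancels `F'/C₀`. What remains is `H' = q g''' = -4 (G_i/q)'`, so `G_i/q + H/4` is constant on the
convex set `S`, and this constant determines `c`.
-/

/-- Below the order of smoothness, each iterated derivative within `S` is the derivative of the
preceding one. -/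
lemma hasDerivWithinAt_iteratedDerivWithin {f : ℝ → ℝ} {S : Set ℝ} {n : ℕ}
    (hf : ContDiffOn ℝ n f S) (hS : UniqueDiffOn ℝ S) (m : ℕ) (hm : m < n) {t : ℝ} (ht : t ∈ S) :
    HasDerivWithinAt (iteratedDerivWithin m f S) (iteratedDerivWithin (m + 1) f S t) S t := by
  rw [iteratedDerivWithin_succ]
  exact (hf.differentiableOn_iteratedDerivWithin (by exact_mod_cast hm) hS t ht).hasDerivWithinAt

lemma eq_of_hasDerivWithinAt_zero {f : ℝ → ℝ} {S : Set ℝ} (hS : Convex ℝ S)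
    (hf : ∀ t ∈ S, HasDerivWithinAt f 0 S t) {x y : ℝ} (hx : x ∈ S) (hy : y ∈ S) : f y = f x := by
  have h := hS.norm_image_sub_le_of_norm_hasDerivWithin_le (C := 0) hf (by simp) hx hy
  rw [zero_mul, norm_le_zero_iff, sub_eq_zero] at h
  exact h

/-- the recursion formula expressing `G_i` (for `2 ≤ i ≤ k−2`, `k ≥ 4`)
in terms of `G_{i−1}`, `G_1` and a primitive `F` of `G_1·G_{i−2}'''`. -/
theorem Gi_recursion_formula
    (T : ℝ) (hT : 0 < T) (k : ℕ) (hk : 3 ≤ k)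
    (q : ℝ → ℝ)
    (hq : ContDiffOn ℝ (2 * k - 2 : ℕ) q (Ico (0:ℝ) T))
    (hq0 : ∀ t ∈ Ico (0:ℝ) T, q t ≠ 0)
    (C₀ : ℝ) (hC₀ : C₀ ≠ 0)
    (G : ℕ → ℝ → ℝ)
    (hGreg : ∀ i ≤ k - 2, ContDiffOn ℝ (2 * k - 2 * i - 2 : ℕ) (G i) (Ico (0:ℝ) T))
    (hG0 : ∀ t ∈ Ico (0:ℝ) T, G 0 t = C₀ * q t)
    (hGrec : ∀ i, 1 ≤ i → i ≤ k - 2 → ∀ t ∈ Ico (0:ℝ) T,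
      derivWithin (fun s => G i s / q s) (Ico (0:ℝ) T) t
        = -(1/4) * q t * iteratedDerivWithin 3 (G (i - 1)) (Ico (0:ℝ) T) t)
    (hk4 : 4 ≤ k) (i : ℕ) (hi2 : 2 ≤ i) (hik : i ≤ k - 2)
    (F : ℝ → ℝ)
    (hF : DifferentiableOn ℝ F (Ico (0:ℝ) T))
    (hF' : ∀ t ∈ Ico (0:ℝ) T,
      derivWithin F (Ico (0:ℝ) T) t
        = G 1 t * iteratedDerivWithin 3 (G (i - 2)) (Ico (0:ℝ) T) t) :
    ∃ c : ℝ, ∀ t ∈ Ico (0:ℝ) T,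
      G i t = -(q t / 4) *
        (q t * iteratedDerivWithin 2 (G (i - 1)) (Ico (0:ℝ) T) t
          - derivWithin q (Ico (0:ℝ) T) t * derivWithin (G (i - 1)) (Ico (0:ℝ) T) t
          + iteratedDerivWithin 2 q (Ico (0:ℝ) T) t * G (i - 1) t
          + (4 / C₀) * (G 1 t * G (i - 1) t / q t ^ 2)
          + (1 / C₀) * (F t + c)) := by
  have hS : UniqueDiffOn ℝ (Ico (0:ℝ) T) := uniqueDiffOn_Ico 0 T
  obtain ⟨j, rfl⟩ : ∃ j, i = j + 2 := ⟨i - 2, by omega⟩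
  have e1 : j + 2 - 1 = j + 1 := rfl
  have e2 : j + 2 - 2 = j := rfl
  rw [e1]
  rw [e2] at hF'
  have hg := hGreg (j + 1) (by omega)
  set S := Ico (0:ℝ) T with hSdef
  have hquot : ∀ l, 1 ≤ l → l ≤ k - 2 → ∀ t ∈ S, HasDerivWithinAt (fun s => G l s / q s)
      (-(1/4) * q t * iteratedDerivWithin 3 (G (l - 1)) S t) S t := by
    intro l h1 h2 t ht
    rw [← hGrec l h1 h2 t ht]
    refine DifferentiableWithinAt.hasDerivWithinAt (DifferentiableWithinAt.fun_div ?_ ?_ (hq0 t ht))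
    · refine (hGreg l h2).differentiableOn ?_ t ht
      have : 2 * k - 2 * l - 2 ≠ 0 := by omega
      exact_mod_cast this
    · refine hq.differentiableOn ?_ t ht
      have : 2 * k - 2 ≠ 0 := by omega
      exact_mod_cast this
  have hG03 : ∀ t ∈ S, iteratedDerivWithin 3 (G 0) S t = C₀ * iteratedDerivWithin 3 q S t := by
    intro t ht
    rw [iteratedDerivWithin_congr (g := fun s => C₀ * q s) hG0 ht]
    refine iteratedDerivWithin_const_mul ht hS C₀ (hq.contDiffWithinAt ht |>.of_le ?_)
    have : 3 ≤ 2 * k - 2 := by omega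
    exact_mod_cast this
  -- The first integral `G_i/q + H/4`.
  let K : ℝ → ℝ := fun t => G (j + 2) t / q t + (1/4) *
    (q t * iteratedDerivWithin 2 (G (j + 1)) S t
      - iteratedDerivWithin 1 q S t * iteratedDerivWithin 1 (G (j + 1)) S t
      + iteratedDerivWithin 2 q S t * G (j + 1) t
      + (4 / C₀) * (G 1 t / q t * (G (j + 1) t / q t))
      + (1 / C₀) * F t)
  have hK : ∀ t ∈ S, HasDerivWithinAt K 0 S t := by
    intro t ht
    have q0 := hasDerivWithinAt_iteratedDerivWithin hq hS 0 (by omega) ht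
    have q1 := hasDerivWithinAt_iteratedDerivWithin hq hS 1 (by omega) ht
    have q2 := hasDerivWithinAt_iteratedDerivWithin hq hS 2 (by omega) ht
    have g0 := hasDerivWithinAt_iteratedDerivWithin hg hS 0 (by omega) ht
    have g1 := hasDerivWithinAt_iteratedDerivWithin hg hS 1 (by omega) ht
    have g2 := hasDerivWithinAt_iteratedDerivWithin hg hS 2 (by omega) ht
    rw [iteratedDerivWithin_zero] at q0 g0
    have r1 := hquot 1 le_rfl (by omega) t ht
    have rg := hquot (j + 1) (by omega) (by omega) t ht
    have ri := hquot (j + 2) (by omega) hik t ht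
    have hFt := (hF t ht).hasDerivWithinAt
    rw [hF' t ht] at hFt
    have hd := ri.add ((((((q0.mul g2).sub (q1.mul g1)).add (q2.mul g0)).add
      ((r1.mul rg).const_mul (4 / C₀))).add (hFt.const_mul (1 / C₀))).const_mul (1/4))
    refine hd.congr_deriv ?_
    have hqt := hq0 t ht
    simp only [Nat.sub_self, Nat.add_sub_cancel, e1, hG03 t ht, zero_add, Nat.reduceAdd]
    field_simp
    ring
  have h0 : (0:ℝ) ∈ S := ⟨le_rfl, hT⟩
  refine ⟨-4 * C₀ * K 0, fun t ht => ?_⟩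
  have hc : K t = K 0 := eq_of_hasDerivWithinAt_zero (convex_Ico 0 T) hK h0 ht
  have hqt := hq0 t ht
  rw [← hc]
  simp only [K, iteratedDerivWithin_one]
  field_simp
  ring
end
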